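/- Let δ>0 and s ∈ (0,1). The derivative d/dr G_δ(s,r), defined for r ∈ (0,s), has a limit as r increases to s, and lim_{r↑s} d/dr G_δ(s,r) = δ·(1−s) − (δ−1)/2. -/

import Mathlib

open MeasureTheory Real Filter

/-- Ascending Pochhammer symbol `(a)_k = a(a+1)⋯(a+k-1)`. -/
noncomputable def poch (a : ℝ) (k : ℕ) : ℝ := ∏ i ∈ Finset.range k, (a + i)

/-- Gauss hypergeometric function `₂F₁(a,b,c,z) = ∑ (a)_k (b)_k / (k! (c)_k) z^k`. -/
noncomputable def hyp2F1 (a b c z : ℝ) : ℝ :=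
  ∑' k : ℕ, (poch a k * poch b k) / ((Nat.factorial k : ℝ) * poch c k) * z ^ k

/-- `K(δ) = 2 Γ((δ+1)/2)² / Γ(δ/2)²`. -/
noncomputable def Kcoef (δ : ℝ) : ℝ :=
  2 * Real.Gamma ((δ + 1) / 2) ^ 2 / Real.Gamma (δ / 2) ^ 2

/-- Two-point kernel `G_δ(s,r)`, equal to the second moment `E^δ[X_s X_r]` of a
δ-dimensional Bessel bridge from 0 to 0 over [0,1]. -/
noncomputable def twoPt (δ s r : ℝ) : ℝ :=
  if s < r then
    Kcoef δ * (r - s) ^ (δ / 2 + 1) * (s * (1 - r)) ^ ((1 : ℝ) / 2) *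
      (r * (1 - s)) ^ (-((δ + 1) / 2)) *
      hyp2F1 ((δ + 1) / 2) ((δ + 1) / 2) (δ / 2) (s * (1 - r) / (r * (1 - s)))
  else
    Kcoef δ * (s - r) ^ (δ / 2 + 1) * (r * (1 - s)) ^ ((1 : ℝ) / 2) *
      (s * (1 - r)) ^ (-((δ + 1) / 2)) *
      hyp2F1 ((δ + 1) / 2) ((δ + 1) / 2) (δ / 2) (r * (1 - s) / (s * (1 - r)))

/-- Coefficient `D(s,r)`. -/
noncomputable def Dcoef (s r : ℝ) : ℝ :=
  if s < r then (1 - s) / ((r - s) * (1 - r)) else s / (r * (s - r))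

/-- Coefficient `C_k = Γ(k+(δ+1)/2)/(Γ(δ/2) Γ(k+δ/2) k!)`. -/
noncomputable def Ccoef (δ : ℝ) (k : ℕ) : ℝ :=
  Real.Gamma ((k : ℝ) + (δ + 1) / 2) /
    (Real.Gamma (δ / 2) * Real.Gamma ((k : ℝ) + δ / 2) * (Nat.factorial k : ℝ))

/-- Coefficient `f_k(s,r)`. -/
noncomputable def fcoef (s r : ℝ) (k : ℕ) : ℝ :=
  if s < r then (2 * (r - s)) ^ ((1 : ℝ) / 2 - (k : ℝ)) * (s / r) ^ ((k : ℝ) + 1 / 2)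
  else (2 * (s - r)) ^ ((1 : ℝ) / 2 - (k : ℝ)) * ((1 - s) / (1 - r)) ^ ((k : ℝ) + 1 / 2)

/-- `Σ^δ_{r,s}(b) = Σ^δ_r(X_s | b)`, the density-weighted conditional expectation of a
δ-dimensional Bessel bridge. -/
noncomputable def SigmaRS (δ r s b : ℝ) : ℝ :=
  ((2 : ℝ) ^ (δ / 2 - 1) * (r * (1 - r)) ^ (δ / 2))⁻¹ *
    Real.exp (-(Dcoef s r) * b ^ 2 / 2) *
    ∑' k : ℕ, Ccoef δ k * fcoef s r k * b ^ (2 * k)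


/-- Sum of the power series with coefficients `u`. -/
noncomputable def psum (u : ℕ → ℝ) (z : ℝ) : ℝ := ∑' k : ℕ, u k * z ^ k

/-- Coefficients of the derived power series. -/
noncomputable def dseq (u : ℕ → ℝ) (k : ℕ) : ℝ := ((k : ℝ) + 1) * u (k + 1)

/-- Coefficients of the symmetric hypergeometric series. -/
noncomputable def hco (a c : ℝ) (k : ℕ) : ℝ :=
  (poch a k * poch a k) / ((Nat.factorial k : ℝ) * poch c k)

theorem hs_congr {f g : ℕ → ℝ} {x : ℝ} (h : HasSum f x) (e : ∀ k, g k = f k) : HasSum g x := by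
  have : g = f := funext e
  rw [this]; exact h

theorem summable_kmul {u : ℕ → ℝ} (hu : ∀ z : ℝ, |z| < 1 → Summable fun k => u k * z ^ k)
    (ρ : ℝ) (h0 : 0 < ρ) (h1 : ρ < 1) : Summable fun k : ℕ => (k : ℝ) * |u k| * ρ ^ (k - 1) := by
  obtain ⟨σ, hσ1, hσ2⟩ := exists_between h1
  have hσ0 : 0 < σ := h0.trans hσ1
  have hs := (hu σ (by rw [abs_of_pos hσ0]; exact hσ2)).abs
  have ht := hs.tendsto_atTop_zero
  obtain ⟨C, hC⟩ := ht.bddAbove_range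
  have hq : ρ / σ < 1 := (div_lt_one hσ0).2 hσ1
  have hq0 : 0 < ρ / σ := by positivity
  have hg := summable_pow_mul_geometric_of_norm_lt_one 1 (r := ρ / σ)
    (by rw [Real.norm_of_nonneg hq0.le]; exact hq)
  refine Summable.of_nonneg_of_le (fun k => by positivity) (fun k => ?_) (hg.mul_left (C / ρ))
  have hk : |u k| * σ ^ k ≤ C := by
    have := hC ⟨k, rfl⟩
    simpa [abs_mul, abs_of_pos hσ0] using this
  rcases k with _ | k
  · simp
  · simp only [Nat.add_sub_cancel, pow_one]
    have e : C / ρ * (((k + 1 : ℕ) : ℝ) * (ρ / σ) ^ (k + 1))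
        = ((k + 1 : ℕ) : ℝ) * (C * (ρ ^ k / σ ^ (k + 1))) := by
      rw [div_pow, pow_succ ρ]; field_simp
    have e2 : ((k + 1 : ℕ) : ℝ) * |u (k + 1)| * ρ ^ k
        = ((k + 1 : ℕ) : ℝ) * ((|u (k + 1)| * σ ^ (k + 1)) * (ρ ^ k / σ ^ (k + 1))) := by
      field_simp
    rw [e, e2]
    gcongr

theorem summable_dseq {u : ℕ → ℝ} (hu : ∀ z : ℝ, |z| < 1 → Summable fun k => u k * z ^ k) :
    ∀ z : ℝ, |z| < 1 → Summable fun k => dseq u k * z ^ k := by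
  intro z hz
  obtain ⟨ρ, hρ1, hρ2⟩ := exists_between hz
  have hρ0 : 0 < ρ := (abs_nonneg z).trans_lt hρ1
  have h := (summable_nat_add_iff 1).2 (summable_kmul hu ρ hρ0 hρ2)
  refine Summable.of_norm_bounded h (fun k => ?_)
  simp only [dseq, norm_mul, Real.norm_eq_abs, abs_pow, Nat.add_sub_cancel]
  push_cast
  rw [abs_of_nonneg (by positivity : (0:ℝ) ≤ (k:ℝ) + 1)]
  gcongr

theorem tsum_kmul {u : ℕ → ℝ} (hu : ∀ z : ℝ, |z| < 1 → Summable fun k => u k * z ^ k)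
    (z : ℝ) (hz : |z| < 1) : HasSum (fun k : ℕ => (k : ℝ) * u k * z ^ (k - 1)) (psum (dseq u) z) := by
  have h := (summable_dseq hu z hz).hasSum
  refine (hasSum_nat_add_iff' 1).1 ?_
  simpa [psum, dseq] using h

theorem hasDerivAt_psum {u : ℕ → ℝ} (hu : ∀ z : ℝ, |z| < 1 → Summable fun k => u k * z ^ k)
    (z : ℝ) (hz : |z| < 1) : HasDerivAt (psum u) (psum (dseq u) z) z := by
  obtain ⟨ρ, hρ1, hρ2⟩ := exists_between hz
  have hρ0 : 0 < ρ := (abs_nonneg z).trans_lt hρ1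
  have h := hasDerivAt_tsum_of_isPreconnected (summable_kmul hu ρ hρ0 hρ2)
    (t := Metric.ball (0:ℝ) ρ) (g := fun k z => u k * z ^ k)
    (g' := fun k z => (k : ℝ) * u k * z ^ (k - 1)) Metric.isOpen_ball
    (convex_ball (0:ℝ) ρ).isPreconnected
    (fun k y _ => by
      have := (hasDerivAt_pow k y).const_mul (u k)
      rw [mul_comm (k : ℝ), mul_assoc]
      exact this)
    (fun k y hy => by
      rw [mem_ball_zero_iff, Real.norm_eq_abs] at hy
      simp only [norm_mul, Real.norm_eq_abs, abs_pow, Nat.abs_cast]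
      gcongr)
    (y₀ := z) (by simpa using hρ1) (hu z hz) (y := z) (by simpa using hρ1)
  rw [(tsum_kmul hu z hz).tsum_eq] at h
  exact h

theorem hasSum_zmul {u : ℕ → ℝ} (hu : ∀ z : ℝ, |z| < 1 → Summable fun k => u k * z ^ k)
    (z : ℝ) (hz : |z| < 1) : HasSum (fun k : ℕ => (k : ℝ) * u k * z ^ k) (z * psum (dseq u) z) := by
  refine hs_congr ((tsum_kmul hu z hz).mul_left z) fun k => ?_
  rcases k with _ | k
  · simp
  · rw [Nat.add_sub_cancel, pow_succ]; ring

theorem poch_pos {c : ℝ} (hc : 0 < c) (k : ℕ) : 0 < poch c k :=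
  Finset.prod_pos fun i _ => by positivity

theorem hco_nonneg (a : ℝ) {c : ℝ} (hc : 0 < c) (k : ℕ) : 0 ≤ hco a c k := by
  have := poch_pos hc k
  unfold hco
  have := mul_self_nonneg (poch a k)
  positivity

theorem hco_zero (a c : ℝ) : hco a c 0 = 1 := by simp [hco, poch]

theorem hco_succ (a : ℝ) {c : ℝ} (hc : 0 < c) (k : ℕ) :
    ((k : ℝ) + 1) * (k + c) * hco a c (k + 1) = (k + a) ^ 2 * hco a c k := by
  have h1 := poch_pos hc k
  have h2 : poch c (k+1) = poch c k * (c + k) := Finset.prod_range_succ _ _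
  have h3 : poch a (k+1) = poch a k * (a + k) := Finset.prod_range_succ _ _
  unfold hco
  rw [h2, h3, Nat.factorial_succ]
  push_cast
  have : 0 < c + k := by positivity
  field_simp
  ring

theorem hco_summable (a : ℝ) {c : ℝ} (hc : 0 < c) (ha : ∀ k : ℕ, (k:ℝ) + a ≠ 0) :
    ∀ z : ℝ, |z| < 1 → Summable fun k => hco a c k * z ^ k := by
  intro z hz
  rcases eq_or_ne z 0 with rfl | hz0
  · refine summable_of_ne_finset_zero (s := {0}) ?_
    intro k hk
    simp at hk
    simp [hk]
  have hne : ∀ k, hco a c k ≠ 0 := by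
    intro k
    induction k with
    | zero => simp [hco_zero]
    | succ k ih =>
      intro h
      have := hco_succ a hc k
      rw [h, mul_zero] at this
      exact (mul_ne_zero (pow_ne_zero 2 (ha k)) ih) this.symm
  refine summable_of_ratio_test_tendsto_lt_one hz
    (Eventually.of_forall fun k => mul_ne_zero (hne k) (pow_ne_zero _ hz0)) ?_
  have hr : ∀ k : ℕ, ‖hco a c (k+1) * z ^ (k+1)‖ / ‖hco a c k * z ^ k‖
      = (((k:ℝ) + a) / (k + 1)) * (((k:ℝ) + a) / (k + c)) * |z| := by
    intro k
    have h1 : (k:ℝ) + c > 0 := by positivity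
    have h2 : hco a c (k+1) = (((k:ℝ) + a) / (k + 1)) * (((k:ℝ) + a) / (k + c)) * hco a c k := by
      have := hco_succ a hc k
      field_simp
      linarith
    rw [← norm_div, Real.norm_eq_abs, h2]
    have h3 : (((k:ℝ) + a) / (k + 1)) * (((k:ℝ) + a) / (k + c)) * hco a c k * z ^ (k+1) / (hco a c k * z^k)
       = (((k:ℝ) + a) / (k + 1)) * (((k:ℝ) + a) / (k + c)) * z := by
      have := hne k
      field_simp
      ring
    rw [h3, abs_mul, abs_of_nonneg]
    have : (((k:ℝ) + a) / (k + 1)) * (((k:ℝ) + a) / (k + c)) = ((k:ℝ)+a)^2 / ((k+1)*(k+c)) := by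
      field_simp
    rw [this]; positivity
  simp_rw [hr]
  have ht : ∀ x y : ℝ, Tendsto (fun k : ℕ => ((k:ℝ) + x) / (k + y)) atTop (nhds 1) := by
    intro x y
    have := tendsto_add_mul_div_add_mul_atTop_nhds (𝕜 := ℝ) x y 1 (d := 1) one_ne_zero
    simpa [add_comm] using this
  simpa using ((ht a 1).mul (ht a c)).mul_const |z|

theorem hco_ode (a : ℝ) {c : ℝ} (hc : 0 < c) (ha : ∀ k : ℕ, (k:ℝ) + a ≠ 0) (z : ℝ) (hz : |z| < 1) :
    z * (1 - z) * psum (dseq (dseq (hco a c))) z + (c - (2 * a + 1) * z) * psum (dseq (hco a c)) z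
      - a ^ 2 * psum (hco a c) z = 0 := by
  have hu := hco_summable a hc ha
  have s0 := (hu z hz).hasSum
  have s1 := hasSum_zmul hu z hz
  have d1 := (summable_dseq hu z hz).hasSum
  have s2 := hasSum_zmul (summable_dseq hu) z hz
  have s3 : HasSum (fun k : ℕ => (k : ℝ) * ((k - 1) * hco a c k) * z ^ k)
      (z * (z * psum (dseq (dseq (hco a c))) z)) := by
    refine (hasSum_nat_add_iff' 1).1 ?_
    have := s2.mul_left z
    simp only [dseq] at this ⊢
    simp only [Finset.range_one, Finset.sum_singleton, Nat.cast_zero, zero_mul, sub_zero]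
    refine hs_congr this fun k => ?_
    push_cast
    ring
  have := ((s2.sub s3).add ((d1.mul_left c).sub (s1.mul_left (2*a+1)))).sub (s0.mul_left (a^2))
  have h0 : HasSum (fun _ : ℕ => (0:ℝ)) 0 := hasSum_zero
  have e := this.unique (by
    refine hs_congr h0 fun k => ?_
    have hk := hco_succ a hc k
    simp only [dseq]
    linear_combination z ^ k * hk)
  rw [← e]; unfold psum; ring

theorem half_ne (k : ℕ) : (k : ℝ) + (-1 / 2) ≠ 0 := by
  intro h
  have h2 : (2 * k : ℝ) = 1 := by linarith
  have h3 : 2 * k = 1 := by exact_mod_cast h2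
  omega

theorem psum_zero (a c : ℝ) : psum (hco a c) 0 = 1 := by
  unfold psum
  rw [tsum_eq_single 0]
  · simp [hco_zero]
  · intro k hk; simp [hk]

theorem psum_pos (a : ℝ) {c : ℝ} (hc : 0 < c) (ha : ∀ k : ℕ, (k:ℝ) + a ≠ 0) {z : ℝ} (h0 : 0 ≤ z)
    (h1 : z < 1) : 0 < psum (hco a c) z := by
  have hs := hco_summable a hc ha z (by rwa [abs_of_nonneg h0])
  refine hs.tsum_pos (fun k => mul_nonneg (hco_nonneg a hc k) (pow_nonneg h0 k)) 0 ?_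
  simp [hco_zero]

theorem euler_wronskian {c : ℝ} (hc : 0 < c) {z : ℝ} (h0 : 0 < z) (h1 : z < 1) :
    (1 - z) * (psum (hco (c + 1 / 2) c) z * psum (dseq (hco (-1 / 2) c)) z
      - psum (dseq (hco (c + 1 / 2) c)) z * psum (hco (-1 / 2) c) z)
      + (c + 1) * (psum (hco (c + 1 / 2) c) z * psum (hco (-1 / 2) c) z) = 0 := by
  have ha : ∀ k : ℕ, (k:ℝ) + (c + 1 / 2) ≠ 0 := fun k => by positivity
  have hF := hco_summable (c + 1 / 2) hc ha
  have hH := hco_summable (-1 / 2) hc half_ne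
  have dF := hasDerivAt_psum hF
  have dF1 := hasDerivAt_psum (summable_dseq hF)
  have dH := hasDerivAt_psum hH
  have dH1 := hasDerivAt_psum (summable_dseq hH)
  have oF := hco_ode (c + 1 / 2) hc ha
  have oH := hco_ode (-1 / 2) hc half_ne
  set F := psum (hco (c + 1 / 2) c)
  set F1 := psum (dseq (hco (c + 1 / 2) c))
  set F2 := psum (dseq (dseq (hco (c + 1 / 2) c)))
  set H := psum (hco (-1 / 2) c)
  set H1 := psum (dseq (hco (-1 / 2) c))
  set H2 := psum (dseq (dseq (hco (-1 / 2) c)))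
  let B : ℝ → ℝ := fun x => (1 - x) * (F x * H1 x - F1 x * H x) + (c + 1) * (F x * H x)
  let B' : ℝ → ℝ := fun x => -1 * (F x * H1 x - F1 x * H x) + (1 - x) *
      ((F1 x * H1 x + F x * H2 x) - (F2 x * H x + F1 x * H1 x))
      + (c + 1) * (F1 x * H x + F x * H1 x)
  have dB : ∀ x : ℝ, |x| < 1 → HasDerivAt B (B' x) x := by
    intro x hx
    have e1 := ((hasDerivAt_id x).const_sub 1).mul
      (((dF x hx).mul (dH1 x hx)).sub ((dF1 x hx).mul (dH x hx)))
    exact e1.add (((dF x hx).mul (dH x hx)).const_mul (c + 1))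
  have key : ∀ x : ℝ, |x| < 1 → c * B x + x * B' x = 0 := by
    intro x hx
    have := oF x hx
    have := oH x hx
    simp only [B, B']
    linear_combination F x * oH x hx - H x * oF x hx
  have hconst : ∀ ε ∈ Set.Ioo 0 z, z ^ c * B z = ε ^ c * B ε := by
    intro ε hε
    have dM : ∀ x ∈ Set.Icc ε z, HasDerivAt (fun x => x ^ c * B x) 0 x := by
      intro x hx
      have hx0 : 0 < x := hε.1.trans_le hx.1
      have hx1 : |x| < 1 := by rw [abs_of_pos hx0]; exact hx.2.trans_lt h1
      have e := (Real.hasDerivAt_rpow_const (p := c) (Or.inl hx0.ne')).mul (dB x hx1)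
      refine e.congr_deriv ?_
      have : x ^ c = x ^ (c - 1) * x := by
        rw [← Real.rpow_add_one hx0.ne']; ring_nf
      rw [this]
      linear_combination x ^ (c - 1) * key x hx1
    exact constant_of_has_deriv_right_zero (f := fun x => x ^ c * B x)
      (fun x hx => (dM x hx).continuousAt.continuousWithinAt)
      (fun x hx => (dM x ⟨hx.1, hx.2.le⟩).hasDerivWithinAt) z ⟨hε.2.le, le_rfl⟩
  have hlim : Tendsto (fun ε => ε ^ c * B ε) (nhdsWithin 0 (Set.Ioi 0)) (nhds 0) := by
    have c1 : ContinuousAt (fun ε : ℝ => ε ^ c * B ε) 0 :=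
      (Real.continuousAt_rpow_const 0 c (Or.inr hc.le)).mul (dB 0 (by simp)).continuousAt
    have c2 := c1.tendsto
    simp only [Real.zero_rpow hc.ne', zero_mul] at c2
    exact c2.mono_left nhdsWithin_le_nhds
  have hz : z ^ c * B z = 0 := by
    refine tendsto_nhds_unique (tendsto_const_nhds.congr' ?_) hlim
    filter_upwards [Ioo_mem_nhdsGT h0] with ε hε using hconst ε hε
  have hzc : z ^ c ≠ 0 := (Real.rpow_pos_of_pos h0 c).ne'
  exact (mul_eq_zero.1 hz).resolve_left hzc

theorem euler_transf {c : ℝ} (hc : 0 < c) {z : ℝ} (h0 : 0 < z) (h1 : z < 1) :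
    (1 - z) ^ (c + 1) * psum (hco (c + 1 / 2) c) z = psum (hco (-1 / 2) c) z := by
  have ha : ∀ k : ℕ, (k:ℝ) + (c + 1 / 2) ≠ 0 := fun k => by positivity
  have hF := hco_summable (c + 1 / 2) hc ha
  have hH := hco_summable (-1 / 2) hc half_ne
  have dF := hasDerivAt_psum hF
  have dH := hasDerivAt_psum hH
  have pH : ∀ x, 0 ≤ x → x < 1 → 0 < psum (hco (-1 / 2) c) x := fun x => psum_pos _ hc half_ne
  have hW := fun x h0 h1 => euler_wronskian hc (z := x) h0 h1
  have zF := psum_zero (c + 1 / 2) c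
  have zH := psum_zero (-1 / 2) c
  set F := psum (hco (c + 1 / 2) c)
  set F1 := psum (dseq (hco (c + 1 / 2) c))
  set H := psum (hco (-1 / 2) c)
  set H1 := psum (dseq (hco (-1 / 2) c))
  have dQ : ∀ x, 0 ≤ x → x < 1 → HasDerivAt (fun x => (1 - x) ^ (c + 1) * F x / H x)
      (((-1 * (c + 1) * (1 - x) ^ (c + 1 - 1) * F x + (1 - x) ^ (c + 1) * F1 x) * H x
        - (1 - x) ^ (c + 1) * F x * H1 x) / H x ^ 2) x := by
    intro x hx0 hx1
    have hx : |x| < 1 := by rwa [abs_of_nonneg hx0]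
    have e := ((hasDerivAt_id x).const_sub 1).rpow_const (p := c + 1) (Or.inl (by simp; linarith))
    exact ((e.mul (dF x hx))).div (dH x hx) (pH x hx0 hx1).ne'
  have d0 : ∀ x, 0 < x → x < 1 → HasDerivAt (fun x => (1 - x) ^ (c + 1) * F x / H x) 0 x := by
    intro x hx0 hx1
    refine (dQ x hx0.le hx1).congr_deriv ?_
    have : (1 - x) ^ (c + 1) = (1 - x) ^ c * (1 - x) := Real.rpow_add_one (by linarith) c
    rw [add_sub_cancel_right, this]
    rw [div_eq_zero_iff]; left
    linear_combination -(1 - x) ^ c * hW x hx0 hx1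
  have hconst : ∀ ε ∈ Set.Ioo 0 z, (1 - z) ^ (c + 1) * F z / H z = (1 - ε) ^ (c + 1) * F ε / H ε := by
    intro ε hε
    have dM : ∀ x ∈ Set.Icc ε z, HasDerivAt (fun x => (1 - x) ^ (c + 1) * F x / H x) 0 x :=
      fun x hx => d0 x (hε.1.trans_le hx.1) (hx.2.trans_lt h1)
    exact constant_of_has_deriv_right_zero (f := fun x => (1 - x) ^ (c + 1) * F x / H x)
      (fun x hx => (dM x hx).continuousAt.continuousWithinAt)
      (fun x hx => (dM x ⟨hx.1, hx.2.le⟩).hasDerivWithinAt) z ⟨hε.2.le, le_rfl⟩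
  have hlim : Tendsto (fun x => (1 - x) ^ (c + 1) * F x / H x) (nhdsWithin 0 (Set.Ioi 0)) (nhds 1) := by
    have c2 := (dQ 0 le_rfl one_pos).continuousAt.tendsto
    simp only [zF, zH, sub_zero, Real.one_rpow, one_mul, div_one] at c2
    exact c2.mono_left nhdsWithin_le_nhds
  have hz : (1 - z) ^ (c + 1) * F z / H z = 1 := by
    refine tendsto_nhds_unique (tendsto_const_nhds.congr' ?_) hlim
    filter_upwards [Ioo_mem_nhdsGT h0] with ε hε using hconst ε hε
  exact (div_eq_one_iff_eq (pH z h0.le h1).ne').1 hz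

/-- telescoping sequence -/
theorem tel {c : ℝ} (hc : 0 < c) (k : ℕ) :
    (((k + 1 : ℕ) : ℝ)) * (((k + 1 : ℕ) : ℝ) - 1 + c) * hco (-1 / 2) c (k + 1)
      - (k : ℝ) * (k - 1 + c) * hco (-1 / 2) c k = (1 / 4 - c * k) * hco (-1 / 2) c k := by
  have := hco_succ (-1 / 2) hc k
  push_cast
  linear_combination this

theorem tel_nonneg {c : ℝ} (hc : 0 < c) (k : ℕ) :
    0 ≤ (k : ℝ) * (k - 1 + c) * hco (-1 / 2) c k := by
  have h := hco_nonneg (-1 / 2) hc k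
  rcases k with _ | k
  · simp
  · push_cast
    have : (0:ℝ) ≤ (k:ℝ) + 1 - 1 + c := by have : (0:ℝ) ≤ k := by positivity
                                           linarith
    positivity

theorem summable_kh {c : ℝ} (hc : 0 < c) : Summable fun k : ℕ => (k : ℝ) * hco (-1 / 2) c k := by
  obtain ⟨K, hK⟩ := exists_nat_ge (1 / (2 * c))
  refine (summable_nat_add_iff K).1 ?_
  set t : ℕ → ℝ := fun k => (k : ℝ) * (k - 1 + c) * hco (-1 / 2) c k with ht
  refine summable_of_sum_range_le (c := 2 / c * t K)
    (fun k => mul_nonneg (by positivity) (hco_nonneg _ hc _)) (fun n => ?_)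
  have h1 : ∀ n, ∑ i ∈ Finset.range n, ((i + K : ℕ) : ℝ) * hco (-1 / 2) c (i + K)
      ≤ 2 / c * (t K - t (n + K)) := by
    intro n
    induction n with
    | zero => simp
    | succ n ih =>
      rw [Finset.sum_range_succ]
      have e := tel hc (n + K)
      have hk : 1 / 2 ≤ c * ((n + K : ℕ) : ℝ) := by
        have : (K:ℝ) ≤ ((n + K : ℕ) : ℝ) := by push_cast; linarith [(Nat.cast_nonneg n : (0:ℝ) ≤ n)]
        have h3 := hK.trans this
        rw [div_le_iff₀ (by positivity)] at h3
        linarith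
      have hn := hco_nonneg (-1 / 2) hc (n + K)
      have e2 : t (n + 1 + K) - t (n + K) = (1 / 4 - c * ((n + K : ℕ) : ℝ)) * hco (-1 / 2) c (n + K) := by
        rw [← e, ht]; simp only; rw [show n + 1 + K = n + K + 1 by ring]
      have e3 : t (n + K) - t (n + 1 + K) ≥ c / 2 * (((n + K : ℕ) : ℝ) * hco (-1 / 2) c (n + K)) := by
        nlinarith
      have e4 : ((n + K : ℕ) : ℝ) * hco (-1 / 2) c (n + K) ≤ 2 / c * (t (n + K) - t (n + 1 + K)) := by
        rw [div_mul_eq_mul_div, le_div_iff₀ hc]; linarith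
      have e5 : 2 / c * (t K - t (n + 1 + K)) = 2 / c * (t K - t (n + K)) + 2 / c * (t (n + K) - t (n + 1 + K)) := by
        ring
      linarith
  refine (h1 n).trans ?_
  have : 0 ≤ t (n + K) := tel_nonneg hc (n + K)
  gcongr
  linarith

theorem summable_h {c : ℝ} (hc : 0 < c) : Summable fun k : ℕ => hco (-1 / 2) c k := by
  refine (summable_nat_add_iff 1).1 ?_
  refine Summable.of_nonneg_of_le (fun k => hco_nonneg _ hc _) (fun k => ?_)
    ((summable_nat_add_iff 1).2 (summable_kh hc))
  have := hco_nonneg (-1 / 2) hc (k + 1)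
  push_cast
  nlinarith [(Nat.cast_nonneg k : (0:ℝ) ≤ k)]

theorem telescope_hasSum {t f : ℕ → ℝ} (hf : Summable f) (h : ∀ k, t (k + 1) - t k = f k)
    (h0 : t 0 = 0) : Tendsto t atTop (nhds (∑' k, f k)) := by
  have := hf.hasSum.tendsto_sum_nat
  refine this.congr fun n => ?_
  rw [← Finset.sum_congr rfl (fun k _ => h k), Finset.sum_range_sub, h0, sub_zero]

theorem gauss_rel {c : ℝ} (hc : 0 < c) :
    ∑' k : ℕ, (k : ℝ) * hco (-1 / 2) c k = 1 / (4 * c) * ∑' k : ℕ, hco (-1 / 2) c k := by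
  have s1 := summable_kh hc
  have s0 := summable_h hc
  set t : ℕ → ℝ := fun k => (k : ℝ) * (k - 1 + c) * hco (-1 / 2) c k with ht
  have sf : HasSum (fun k : ℕ => (1 / 4 - c * k) * hco (-1 / 2) c k)
      (1 / 4 * (∑' k : ℕ, hco (-1 / 2) c k) - c * ∑' k : ℕ, (k : ℝ) * hco (-1 / 2) c k) :=
    hs_congr ((s0.hasSum.mul_left (1 / 4)).sub (s1.hasSum.mul_left c)) fun k => by ring
  have hlim := telescope_hasSum (t := t) sf.summable (tel hc) (by simp [ht])
  rw [sf.tsum_eq] at hlim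
  set L := 1 / 4 * (∑' k : ℕ, hco (-1 / 2) c k) - c * ∑' k : ℕ, (k : ℝ) * hco (-1 / 2) c k with hL
  have hL0 : 0 ≤ L := ge_of_tendsto' hlim (tel_nonneg hc)
  rcases hL0.eq_or_lt with h | h
  · field_simp
    linarith
  · exfalso
    have hev := hlim.eventually (lt_mem_nhds (half_lt_self h))
    obtain ⟨N, hN⟩ := eventually_atTop.1 hev
    refine Real.not_summable_one_div_natCast ?_
    refine (summable_nat_add_iff (N + 1)).1 ?_
    refine Summable.of_nonneg_of_le (fun k => by positivity) (fun k => ?_)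
      (((summable_nat_add_iff (N + 1)).2 s1).mul_left ((1 + c) * (2 / L)))
    have h2 := hN (k + (N + 1)) (by omega)
    simp only [ht] at h2
    have hm : (1:ℝ) ≤ ((k + (N + 1) : ℕ) : ℝ) := by exact_mod_cast (by omega : 1 ≤ k + (N + 1))
    generalize ((k + (N + 1) : ℕ) : ℝ) = m at *
    have hn := hco_nonneg (-1 / 2) hc (k + (N + 1))
    generalize hco (-1 / 2) c (k + (N + 1)) = x at *
    have h3 : m * (m - 1 + c) * x ≤ m * (m * (1 + c)) * x := by
      gcongr
      nlinarith
    have h4 : L / 2 ≤ m * (m * (1 + c)) * x := by linarith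
    rw [div_le_iff₀ (by linarith)]
    have : (1 + c) * (2 / L) * (m * x) * m = (2 / L) * (m * (m * (1 + c)) * x) := by ring
    rw [this]
    calc 1 = 2 / L * (L / 2) := by field_simp
      _ ≤ _ := by gcongr

theorem hco_shift (a : ℝ) {c : ℝ} (hc : 0 < c) (k : ℕ) :
    (c + k) * hco a (c + 1) k = c * hco a c k := by
  have h1 := poch_pos hc k
  have h2 := poch_pos (by linarith : 0 < c + 1) k
  have h3 : c * poch (c + 1) k = poch c k * (c + k) := by
    rw [show poch c k * (c + k) = poch c (k + 1) from (Finset.prod_range_succ _ _).symm]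
    unfold poch
    rw [Finset.prod_range_succ']
    simp only [Nat.cast_zero, add_zero, Nat.cast_add, Nat.cast_one]
    rw [mul_comm]
    congr 1
    refine Finset.prod_congr rfl fun i _ => by ring
  unfold hco
  field_simp
  linear_combination -(poch a k) ^ 2 * h3

theorem gauss_contig {c : ℝ} (hc : 0 < c) :
    c * (c + 1) * (∑' k : ℕ, hco (-1 / 2) c k)
      = (c + 1 / 2) ^ 2 * ∑' k : ℕ, hco (-1 / 2) (c + 1) k := by
  have s1 := summable_kh hc
  have s0 := summable_h hc
  have s2 := summable_h (by linarith : 0 < c + 1)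
  have sf := (s0.hasSum.mul_left (c * (c + 1))).sub (s2.hasSum.mul_left ((c + 1 / 2) ^ 2))
  have hlim := telescope_hasSum (t := fun k => -c * (k * hco (-1 / 2) c k)) sf.summable (fun k => by
    have e1 := hco_shift (-1 / 2) hc k
    have e2 := hco_succ (-1 / 2) hc k
    have hk : (k:ℝ) + c > 0 := by positivity
    have hk' : (k:ℝ) + c ≠ 0 := hk.ne'
    apply mul_left_cancel₀ hk'
    push_cast
    linear_combination -c * e2 + (c + 1 / 2) ^ 2 * e1) (by simp)
  have h0 := (s1.tendsto_atTop_zero).const_mul (-c)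
  rw [mul_zero] at h0
  have := tendsto_nhds_unique hlim h0
  rw [sf.tsum_eq] at this
  linarith

/-- Value of the series at one -/
noncomputable def Sval (c : ℝ) : ℝ := ∑' k : ℕ, hco (-1 / 2) c k

theorem Sval_ge {c : ℝ} (hc : 0 < c) : 1 ≤ Sval c := by
  have := (summable_h hc).le_tsum 0 (fun k _ => hco_nonneg _ hc k)
  rwa [hco_zero] at this

theorem Sval_le {c : ℝ} (hc : 0 < c) : Sval c ≤ 1 + Sval c / (4 * c) := by
  have h1 := gauss_rel hc
  have h2 : Sval c = 1 + ∑' k : ℕ, hco (-1 / 2) c (k + 1) := by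
    unfold Sval
    rw [(summable_h hc).tsum_eq_zero_add, hco_zero]
  have h3 : ∑' k : ℕ, (k : ℝ) * hco (-1 / 2) c k
      = ∑' k : ℕ, ((k + 1 : ℕ) : ℝ) * hco (-1 / 2) c (k + 1) := by
    rw [(summable_kh hc).tsum_eq_zero_add]; simp
  have h4 : ∑' k : ℕ, hco (-1 / 2) c (k + 1) ≤ ∑' k : ℕ, ((k + 1 : ℕ) : ℝ) * hco (-1 / 2) c (k + 1) := by
    refine Summable.tsum_le_tsum (fun k => ?_) ((summable_nat_add_iff 1).2 (summable_h hc))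
      ((summable_nat_add_iff 1).2 (summable_kh hc))
    have := hco_nonneg (-1 / 2) hc (k + 1)
    push_cast
    nlinarith [(Nat.cast_nonneg k : (0:ℝ) ≤ k)]
  have h5 : Sval c / (4 * c) = 1 / (4 * c) * Sval c := by ring
  have h6 : 1 / (4 * c) * Sval c = 1 / (4 * c) * ∑' k : ℕ, hco (-1 / 2) c k := rfl
  linarith

theorem gamma_mid {x : ℝ} (hx : 0 < x) :
    Real.Gamma (x + 1 / 2) ^ 2 ≤ Real.Gamma x * Real.Gamma (x + 1) := by
  have h := Real.Gamma_mul_add_mul_le_rpow_Gamma_mul_rpow_Gamma hx (by linarith : 0 < x + 1)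
    (by norm_num : (0:ℝ) < 1 / 2) (by norm_num : (0:ℝ) < 1 / 2) (by norm_num)
  have g1 := Real.Gamma_pos_of_pos hx
  have g2 := Real.Gamma_pos_of_pos (by linarith : 0 < x + 1)
  have g3 := Real.Gamma_pos_of_pos (by linarith : 0 < x + 1 / 2)
  rw [show 1 / 2 * x + 1 / 2 * (x + 1) = x + 1 / 2 by ring, ← Real.mul_rpow g1.le g2.le,
    ← Real.sqrt_eq_rpow] at h
  calc _ ≤ (√(Real.Gamma x * Real.Gamma (x + 1))) ^ 2 := by gcongr
    _ = _ := Real.sq_sqrt (by positivity)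

/-- The Gamma quotient. -/
noncomputable def gq (c : ℝ) : ℝ := Real.Gamma c * Real.Gamma (c + 1) / Real.Gamma (c + 1 / 2) ^ 2

theorem gq_ge {c : ℝ} (hc : 0 < c) : 1 ≤ gq c := by
  have g3 := Real.Gamma_pos_of_pos (by linarith : 0 < c + 1 / 2)
  unfold gq
  rw [le_div_iff₀ (by positivity), one_mul]
  exact gamma_mid hc

theorem gq_le {c : ℝ} (hc : 0 < c) : gq c ≤ 1 + 1 / (2 * c) := by
  have g1 := Real.Gamma_pos_of_pos hc
  have g3 := Real.Gamma_pos_of_pos (by linarith : 0 < c + 1 / 2)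
  have h := gamma_mid (by linarith : 0 < c + 1 / 2)
  rw [Real.Gamma_add_one (by linarith : c + 1 / 2 ≠ 0),
    show c + 1 / 2 + 1 / 2 = c + 1 by ring, Real.Gamma_add_one hc.ne'] at h
  unfold gq
  rw [div_le_iff₀ (by positivity), Real.Gamma_add_one hc.ne']
  have : (1 + 1 / (2 * c)) = (c + 1 / 2) / c := by field_simp
  rw [this, div_mul_eq_mul_div, le_div_iff₀ hc]
  nlinarith

theorem gq_contig {c : ℝ} (hc : 0 < c) : c * (c + 1) * gq c = (c + 1 / 2) ^ 2 * gq (c + 1) := by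
  have g1 := Real.Gamma_pos_of_pos hc
  have g3 := Real.Gamma_pos_of_pos (by linarith : 0 < c + 1 / 2)
  unfold gq
  rw [show c + 1 + 1 / 2 = (c + 1 / 2) + 1 by ring,
    Real.Gamma_add_one (by linarith : c + 1 / 2 ≠ 0),
    Real.Gamma_add_one (by linarith : c + 1 ≠ 0), Real.Gamma_add_one hc.ne']
  field_simp

theorem Sval_eq {c : ℝ} (hc : 0 < c) : Sval c = gq c := by
  have hrat : ∀ n : ℕ, Sval (c + n) / gq (c + n) = Sval c / gq c := by
    intro n
    induction n with
    | zero => simp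
    | succ n ih =>
      rw [← ih]
      have hn : 0 < c + n := by positivity
      have e1 : (c + n) * (c + n + 1) * Sval (c + n) = (c + n + 1 / 2) ^ 2 * Sval (c + n + 1) :=
        gauss_contig hn
      have e2 := gq_contig hn
      have p1 := gq_ge hn
      have p2 := gq_ge (by linarith : 0 < c + n + 1)
      push_cast
      rw [← add_assoc]
      rw [div_eq_div_iff (by linarith) (by linarith)]
      have : (c + n) * (c + n + 1) * (c + n + 1 / 2) ^ 2 ≠ 0 := by positivity
      apply mul_left_cancel₀ this
      linear_combination ((c + n) * (c + n + 1) * gq (c + n)) * (-e1) + ((c + n) * (c + n + 1) * Sval (c + n)) * e2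
  have hc4 : Tendsto (fun n : ℕ => c + (n : ℝ)) atTop atTop :=
    tendsto_atTop_add_const_left _ _ tendsto_natCast_atTop_atTop
  have l1 : Tendsto (fun n : ℕ => gq (c + n)) atTop (nhds 1) := by
    have : Tendsto (fun n : ℕ => 1 + 1 / 2 * (c + (n:ℝ))⁻¹) atTop (nhds (1 + 1 / 2 * 0)) :=
      ((tendsto_inv_atTop_zero.comp hc4).const_mul _).const_add _
    rw [mul_zero, add_zero] at this
    refine tendsto_of_tendsto_of_tendsto_of_le_of_le tendsto_const_nhds this
      (fun n => gq_ge (by positivity)) (fun n => ?_)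
    refine (gq_le (by positivity : 0 < c + n)).trans (le_of_eq ?_)
    have : 0 < c + n := by positivity
    field_simp
  have l2 : Tendsto (fun n : ℕ => Sval (c + n)) atTop (nhds 1) := by
    have : Tendsto (fun n : ℕ => (1 - 1 / 4 * (c + (n:ℝ))⁻¹)⁻¹) atTop (nhds ((1 - 1 / 4 * 0)⁻¹)) :=
      (((tendsto_inv_atTop_zero.comp hc4).const_mul _).const_sub _).inv₀ (by norm_num)
    rw [mul_zero, sub_zero, inv_one] at this
    refine tendsto_of_tendsto_of_tendsto_of_le_of_le' tendsto_const_nhds this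
      (Eventually.of_forall fun n => Sval_ge (by positivity)) ?_
    filter_upwards [hc4.eventually_ge_atTop 1] with n hn
    have h0 : 0 < c + n := by positivity
    have h1 := Sval_le h0
    have h2 : (c + (n:ℝ))⁻¹ ≤ 1 := inv_le_one_of_one_le₀ hn
    rw [← one_div (1 - _), le_div_iff₀ (by linarith)]
    have : Sval (c + n) / (4 * (c + n)) = Sval (c + n) * (1 / 4 * (c + (n:ℝ))⁻¹) := by field_simp
    linarith
  have l3 := (l2.div l1 one_ne_zero)
  simp only [div_one] at l3
  have l4 : Sval c / gq c = 1 := by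
    refine tendsto_nhds_unique (tendsto_const_nhds.congr fun n => ?_) l3
    exact (hrat n).symm
  exact (div_eq_one_iff_eq (by linarith [gq_ge hc])).1 l4

theorem K_mul_S {δ : ℝ} (hδ : 0 < δ) : Kcoef δ * Sval (δ / 2) = δ := by
  have hc : 0 < δ / 2 := by linarith
  rw [Sval_eq hc]
  unfold gq Kcoef
  have g1 := Real.Gamma_pos_of_pos hc
  have g3 := Real.Gamma_pos_of_pos (by linarith : 0 < δ / 2 + 1 / 2)
  rw [Real.Gamma_add_one hc.ne', show (δ + 1) / 2 = δ / 2 + 1 / 2 by ring]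
  field_simp

theorem psum_lim {u : ℕ → ℝ} (hu : Summable u) :
    Tendsto (psum u) (nhdsWithin 1 (Set.Iio 1)) (nhds (∑' k, u k)) :=
  Real.tendsto_tsum_powerSeries_nhdsWithin_lt hu.hasSum.tendsto_sum_nat

theorem twoPt_eq {δ : ℝ} (hδ : 0 < δ) {s : ℝ} (hs : s ∈ Set.Ioo (0 : ℝ) 1) {r : ℝ}
    (hr : r ∈ Set.Ioo 0 s) : twoPt δ s r = Kcoef δ * (√(s * (1 - s)) * √(r * (1 - r))) *
      psum (hco (-1 / 2) (δ / 2)) (r * (1 - s) / (s * (1 - r))) := by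
  obtain ⟨hs0, hs1⟩ := hs
  obtain ⟨hr0, hrs⟩ := hr
  have p1 : 0 < 1 - s := by linarith
  have p2 : 0 < 1 - r := by linarith
  have p3 : 0 < s - r := by linarith
  have hc : 0 < δ / 2 := by linarith
  have hz0 : 0 < r * (1 - s) / (s * (1 - r)) := by positivity
  have hz : 1 - r * (1 - s) / (s * (1 - r)) = (s - r) / (s * (1 - r)) := by
    field_simp; ring
  have hz1 : r * (1 - s) / (s * (1 - r)) < 1 := by
    have : 0 < (s - r) / (s * (1 - r)) := by positivity
    linarith
  have e := euler_transf hc hz0 hz1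
  rw [← e, hz]
  unfold twoPt
  rw [if_neg (by linarith)]
  have : hyp2F1 ((δ + 1) / 2) ((δ + 1) / 2) (δ / 2) (r * (1 - s) / (s * (1 - r)))
      = psum (hco (δ / 2 + 1 / 2) (δ / 2)) (r * (1 - s) / (s * (1 - r))) := by
    rw [show (δ + 1) / 2 = δ / 2 + 1 / 2 by ring]; rfl
  rw [this]
  generalize psum (hco (δ / 2 + 1 / 2) (δ / 2)) (r * (1 - s) / (s * (1 - r))) = F
  have q : 0 < s * (1 - r) := by positivity
  rw [Real.div_rpow p3.le q.le, ← Real.sqrt_mul (by positivity),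
    show s * (1 - s) * (r * (1 - r)) = (r * (1 - s)) * (s * (1 - r)) by ring,
    Real.sqrt_eq_rpow, Real.mul_rpow (by positivity) q.le,
    show -((δ + 1) / 2) = 1 / 2 - (δ / 2 + 1) by ring, Real.rpow_sub q]
  ring

theorem twoPt_deriv_left_limit (δ : ℝ) (hδ : 0 < δ) (s : ℝ) (hs : s ∈ Set.Ioo (0 : ℝ) 1) :
    Tendsto (fun r => deriv (fun r => twoPt δ s r) r)
      (nhdsWithin s (Set.Ioo 0 s)) (nhds (δ * (1 - s) - (δ - 1) / 2)) := by
  have hs0 := hs.1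
  have hs1 := hs.2
  have p1 : 0 < 1 - s := by linarith
  have hc : 0 < δ / 2 := by linarith
  have hsum := hco_summable (-1 / 2) hc half_ne
  set H := psum (hco (-1 / 2) (δ / 2)) with hH
  set H1 := psum (dseq (hco (-1 / 2) (δ / 2))) with hH1
  have hzs : ∀ r ∈ Set.Ioo 0 s, 0 < r * (1 - s) / (s * (1 - r)) ∧ r * (1 - s) / (s * (1 - r)) < 1 := by
    intro r hr
    have p2 : 0 < 1 - r := by linarith [hr.2]
    have := hr.1
    refine ⟨by positivity, ?_⟩
    rw [div_lt_one (by positivity)]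
    nlinarith [hr.2]
  have hd : ∀ r ∈ Set.Ioo 0 s, deriv (fun r => twoPt δ s r) r =
      Kcoef δ * (√(s * (1 - s)) * ((1 - 2 * r) / (2 * √(r * (1 - r))))) *
        H (r * (1 - s) / (s * (1 - r))) +
      Kcoef δ * (√(s * (1 - s)) * √(r * (1 - r))) *
        (H1 (r * (1 - s) / (s * (1 - r))) * ((1 - s) / (s * (1 - r) ^ 2))) := by
    intro r hr
    have hr0 := hr.1
    have p2 : 0 < 1 - r := by linarith [hr.2]
    have hev : (fun r => twoPt δ s r) =ᶠ[nhds r] fun r => Kcoef δ * (√(s * (1 - s)) * √(r * (1 - r))) *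
        H (r * (1 - s) / (s * (1 - r))) := by
      filter_upwards [Ioo_mem_nhds hr.1 hr.2] with x hx using twoPt_eq hδ hs hx
    rw [hev.deriv_eq]
    apply HasDerivAt.deriv
    have a1 : HasDerivAt (fun x : ℝ => x * (1 - x)) (1 - 2 * r) r := by
      have := (hasDerivAt_id r).mul ((hasDerivAt_id r).const_sub 1)
      refine this.congr_deriv ?_
      simp; ring
    have a2 := ((a1.sqrt (by positivity)).const_mul (√(s * (1 - s)))).const_mul (Kcoef δ)
    have a3 : HasDerivAt (fun x : ℝ => x * (1 - s) / (s * (1 - x))) ((1 - s) / (s * (1 - r) ^ 2)) r := by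
      have := ((hasDerivAt_id r).mul_const (1 - s)).div
        (((hasDerivAt_id r).const_sub 1).const_mul s) (by simp; constructor <;> linarith)
      refine this.congr_deriv ?_
      simp
      field_simp
      ring
    have hz := hzs r hr
    have a4 := (hasDerivAt_psum hsum (r * (1 - s) / (s * (1 - r)))
      (by rw [abs_of_pos hz.1]; exact hz.2)).comp r a3
    exact a2.mul a4
  have hle : nhdsWithin s (Set.Ioo 0 s) ≤ nhds s := nhdsWithin_le_nhds
  have hmem : ∀ᶠ r in nhdsWithin s (Set.Ioo 0 s), r ∈ Set.Ioo 0 s := eventually_mem_nhdsWithin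
  refine Tendsto.congr' (hmem.mono fun r hr => (hd r hr).symm) ?_
  have hz : Tendsto (fun r => r * (1 - s) / (s * (1 - r))) (nhdsWithin s (Set.Ioo 0 s))
      (nhdsWithin 1 (Set.Iio 1)) := by
    refine tendsto_nhdsWithin_iff.2 ⟨?_, hmem.mono fun r hr => (hzs r hr).2⟩
    have c1 : ContinuousAt (fun r => r * (1 - s) / (s * (1 - r))) s := by
      refine ContinuousAt.div (by fun_prop) (by fun_prop) (by positivity)
    have := c1.tendsto
    rw [div_self (by positivity)] at this
    exact this.mono_left hle
  have s1 : Summable (dseq (hco (-1 / 2) (δ / 2))) := by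
    have := (summable_nat_add_iff 1).2 (summable_kh hc)
    refine this.congr fun k => ?_
    simp [dseq]
  have lH : Tendsto (fun r => H (r * (1 - s) / (s * (1 - r)))) (nhdsWithin s (Set.Ioo 0 s))
      (nhds (Sval (δ / 2))) := (psum_lim (summable_h hc)).comp hz
  have hv : ∑' k, dseq (hco (-1 / 2) (δ / 2)) k = 1 / (4 * (δ / 2)) * Sval (δ / 2) := by
    have h := gauss_rel hc
    rw [(summable_kh hc).tsum_eq_zero_add] at h
    rw [Sval, ← h]
    simp [dseq]
  have lH1 := (psum_lim s1).comp hz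
  rw [hv] at lH1
  have cs : Tendsto (fun r : ℝ => √(r * (1 - r))) (nhdsWithin s (Set.Ioo 0 s)) (nhds (√(s * (1 - s)))) := by
    have : Continuous (fun r : ℝ => √(r * (1 - r))) := by fun_prop
    exact (this.tendsto s).mono_left hle
  have hq : √(s * (1 - s)) ≠ 0 := (Real.sqrt_pos.2 (by positivity)).ne'
  have cn : Tendsto (fun r : ℝ => 1 - 2 * r) (nhdsWithin s (Set.Ioo 0 s)) (nhds (1 - 2 * s)) := by
    have : Continuous (fun r : ℝ => 1 - 2 * r) := by fun_prop
    exact (this.tendsto s).mono_left hle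
  have cz : Tendsto (fun r : ℝ => (1 - s) / (s * (1 - r) ^ 2)) (nhdsWithin s (Set.Ioo 0 s))
      (nhds ((1 - s) / (s * (1 - s) ^ 2))) := by
    have : ContinuousAt (fun r : ℝ => (1 - s) / (s * (1 - r) ^ 2)) s :=
      ContinuousAt.div (by fun_prop) (by fun_prop) (by positivity)
    exact this.tendsto.mono_left hle
  have main := ((((cn.div (cs.const_mul 2) (by positivity)).const_mul (√(s * (1 - s)))).const_mul
    (Kcoef δ)).mul lH).add (((cs.const_mul (√(s * (1 - s)))).const_mul (Kcoef δ)).mul (lH1.mul cz))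
  have hKS := K_mul_S hδ
  have hval : Kcoef δ * (√(s * (1 - s)) * ((1 - 2 * s) / (2 * √(s * (1 - s))))) * Sval (δ / 2) +
      Kcoef δ * (√(s * (1 - s)) * √(s * (1 - s))) *
        (1 / (4 * (δ / 2)) * Sval (δ / 2) * ((1 - s) / (s * (1 - s) ^ 2)))
      = δ * (1 - s) - (δ - 1) / 2 := by
    rw [Real.mul_self_sqrt (by positivity)]
    have e1 : √(s * (1 - s)) * ((1 - 2 * s) / (2 * √(s * (1 - s)))) = (1 - 2 * s) / 2 := by
      field_simp
    have e2 : Kcoef δ * (s * (1 - s)) * (1 / (4 * (δ / 2)) * Sval (δ / 2) * ((1 - s) / (s * (1 - s) ^ 2)))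
      = (Kcoef δ * Sval (δ / 2)) * (1 / (2 * δ)) := by
      field_simp
      try ring
    rw [e1, e2, hKS]
    have e3 : δ * (1 / (2 * δ)) = 1 / 2 := by field_simp
    rw [e3]
    linear_combination (1 - 2 * s) / 2 * hKS
  rw [hval] at main
  exact main
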